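/- Let n ≥ 3 and let ω be a skew-symmetric bilinear form on V such that the kernel of the convolution operator Q_ω on ⋀^{n-1}V is exactly equal to H_V (the span of the concordance vectors, regarded inside ⋀^{n-1}V). Then there exists a nonzero real number a such that ω = a·Λ_{2n-2}, i.e. ω(v_i, v_{i+1}) = a·(−1)^{i+1} for 1 ≤ i ≤ 2n−3 and ω(v_i, v_j) = 0 whenever |i−j| ≠ 1. -/

import Mathlib

open scoped Classical

noncomputable section

/-- `P` is a set partition of the finite ground set `G` (of integers): its blocks are nonempty
subsets of `G`, and every element of `G` lies in exactly one block. -/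
def IsPartitionOf (G : Finset ℕ) (P : Finset (Finset ℕ)) : Prop :=
  (∀ B ∈ P, B.Nonempty) ∧ (∀ B ∈ P, B ⊆ G) ∧ ∀ x ∈ G, ∃! B, B ∈ P ∧ x ∈ B

/-- A collection of blocks is non-crossing: there are no `a < b < c < d` with `a, c` in one
block and `b, d` in a different block. -/
def NonCrossing (P : Finset (Finset ℕ)) : Prop :=
  ∀ a b c d : ℕ, a < b → b < c → c < d →
    ∀ B₁ ∈ P, ∀ B₂ ∈ P, a ∈ B₁ → c ∈ B₁ → b ∈ B₂ → d ∈ B₂ → B₁ = B₂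

/-- The set `{1, 3, …, 2n-1}` of "barred" boundary indices `k̄ = 2k-1`. -/
def oddSet (n : ℕ) : Finset ℕ := (Finset.range n).image fun k => 2 * k + 1

/-- The set `{2, 4, …, 2n}` of "tilde" boundary indices `k̃ = 2k`. -/
def evenSet (n : ℕ) : Finset ℕ := (Finset.range n).image fun k => 2 * k + 2

/-- `σ` is a non-crossing partition of `{1̄,…,n̄}` and `σd` is its dual: a non-crossing
partition of `{1̃,…,ñ}` such that the merged partition `σ ∪ σd` is non-crossing and the
numbers of blocks add up to `n + 1`. -/
def IsNCPair (n : ℕ) (σ σd : Finset (Finset ℕ)) : Prop :=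
  IsPartitionOf (oddSet n) σ ∧ NonCrossing σ ∧
    IsPartitionOf (evenSet n) σd ∧ NonCrossing σd ∧
    NonCrossing (σ ∪ σd) ∧ σ.card + σd.card = n + 1

/-- An `(n-1)`-element subset `I ⊆ {1,…,2n}` is concordant with `σ` if every block of `σ`
and every block of the dual `σd` contains exactly one element not in `I`. -/
def ConcordantWith (σ σd : Finset (Finset ℕ)) (I : Finset ℕ) : Prop :=
  ∀ B ∈ σ ∪ σd, (B \ I).card = 1

/-- `stdE n i` is the `i`-th standard basis vector (1-indexed) of `ℝ^{2n}`. -/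
def stdE (n i : ℕ) : Fin (2 * n) → ℝ := fun t => if (t : ℕ) + 1 = i then 1 else 0

/-- The wedge `e_{i_1} ∧ … ∧ e_{i_k}` over the increasing enumeration `i_1 < … < i_k`
of a finite set `I` of (1-indexed) indices. -/
def finsetWedge (n k : ℕ) (I : Finset ℕ) : ExteriorAlgebra ℝ (Fin (2 * n) → ℝ) :=
  ExteriorAlgebra.ιMulti ℝ k fun p => stdE n ((I.sort (· ≤ ·)).getD p.val 0)

/-- The concordance vector `w_σ = Σ_I e_I ∈ ⋀^{n-1} ℝ^{2n}`, the sum over all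
`(n-1)`-element subsets `I` of `{1,…,2n}` concordant with `σ`. -/
def concVec (n : ℕ) (σ σd : Finset (Finset ℕ)) : ExteriorAlgebra ℝ (Fin (2 * n) → ℝ) :=
  ∑ I ∈ ((Finset.Icc 1 (2 * n)).powersetCard (n - 1)).filter (ConcordantWith σ σd),
    finsetWedge n (n - 1) I

end
noncomputable section

/-- The subspace `V = {v ∈ ℝ^{2n} : Σ_{i=1}^n (-1)^i v_{2i} = 0, Σ_{i=1}^n (-1)^i v_{2i-1} = 0}`. -/
def Vsub (n : ℕ) : Submodule ℝ (Fin (2 * n) → ℝ) :=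
  LinearMap.ker (∑ k : Fin n, ((-1 : ℝ)) ^ (k.val + 1) •
      (LinearMap.proj (⟨2 * k.val + 1, by have := k.isLt; omega⟩ : Fin (2 * n)) :
        (Fin (2 * n) → ℝ) →ₗ[ℝ] ℝ)) ⊓
  LinearMap.ker (∑ k : Fin n, ((-1 : ℝ)) ^ (k.val + 1) •
      (LinearMap.proj (⟨2 * k.val, by have := k.isLt; omega⟩ : Fin (2 * n)) :
        (Fin (2 * n) → ℝ) →ₗ[ℝ] ℝ))

/-- The basis vectors `v_k = e_k + e_{k+2}`, `k = 1, …, 2n-2`, of the subspace `V`. -/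
def vVec (n k : ℕ) : Fin (2 * n) → ℝ := stdE n k + stdE n (k + 2)

/-- The wedge `x_1 ∧ … ∧ x_k` of vectors of a module, as an element of the `k`-th exterior
power (a submodule of the exterior algebra). -/
def wedgeIn (k : ℕ) {M : Type*} [AddCommGroup M] [Module ℝ M] (x : Fin k → M) :
    ↥(⋀[ℝ]^k M) :=
  ⟨ExteriorAlgebra.ιMulti ℝ k x, ExteriorAlgebra.ιMulti_range ℝ k (Set.mem_range_self x)⟩

/-- The subspace `H_V ⊆ ⋀^{n-1} V`: the span of the preimages in `⋀^{n-1} V` of the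
concordance vectors `w_σ ∈ ⋀^{n-1} ℝ^{2n}` under the map induced by the inclusion `V ⊆ ℝ^{2n}`. -/
def HV (n : ℕ) : Submodule ℝ ↥(⋀[ℝ]^(n - 1) ↥(Vsub n)) :=
  Submodule.span ℝ {y | ∃ σ σd : Finset (Finset ℕ), IsNCPair n σ σd ∧
    ExteriorAlgebra.map ((Vsub n).subtype) (y : ExteriorAlgebra ℝ ↥(Vsub n)) = concVec n σ σd}

end

section Helpers

open ExteriorAlgebra in
/-- product of `ι` over a list -/
noncomputable def lw {M : Type*} [AddCommGroup M] [Module ℝ M] (l : List M) :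
    ExteriorAlgebra ℝ M := (l.map (ExteriorAlgebra.ι ℝ)).prod

section lw
variable {M : Type*} [AddCommGroup M] [Module ℝ M]

lemma lw_nil : lw ([] : List M) = 1 := by simp [lw]
lemma lw_cons (a : M) (l : List M) : lw (a :: l) = ExteriorAlgebra.ι ℝ a * lw l := by simp [lw]
lemma lw_append (l l' : List M) : lw (l ++ l') = lw l * lw l' := by simp [lw]

lemma ι_anti (a b : M) : ExteriorAlgebra.ι ℝ a * ExteriorAlgebra.ι ℝ b =
    - (ExteriorAlgebra.ι ℝ b * ExteriorAlgebra.ι ℝ a) :=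
  eq_neg_of_add_eq_zero_left (ExteriorAlgebra.ι_add_mul_swap a b)

lemma lw_perm {l l' : List M} (h : l.Perm l') : lw l = lw l' ∨ lw l = - lw l' := by
  induction h with
  | nil => simp
  | cons x h ih =>
    rw [lw_cons, lw_cons]
    rcases ih with ih | ih <;> simp [ih]
  | swap x y l =>
    right
    simp only [lw_cons]
    rw [← mul_assoc, ι_anti, neg_mul, mul_assoc]
  | trans h1 h2 ih1 ih2 =>
    rcases ih1 with ih1 | ih1 <;> rcases ih2 with ih2 | ih2 <;> simp [ih1, ih2]

lemma lw_dup {l : List M} {a : M} (h : a ∈ l) : lw (a :: l) = 0 := by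
  obtain ⟨s, t, rfl⟩ := List.append_of_mem h
  have : (a :: (s ++ a :: t)).Perm (a :: a :: (s ++ t)) :=
    List.Perm.cons _ List.perm_middle
  have h0 : lw (a :: a :: (s ++ t)) = 0 := by
    rw [lw_cons, lw_cons, ← mul_assoc, ExteriorAlgebra.ι_sq_zero, zero_mul]
  rcases lw_perm this with h | h <;> rw [h, h0]
  simp

lemma lw_dup' {l : List M} {a b : M} (h : a ∈ l ∨ b ∈ l) : lw (a :: b :: l) = 0 := by
  rcases h with h | h
  · exact lw_dup (List.mem_cons_of_mem _ h)
  · rw [lw_cons, lw_dup h, mul_zero]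

lemma wedgeIn_coe (k : ℕ) (l : List M) (hl : l.length = k) :
    ((wedgeIn k (fun r : Fin k => l.getD r.val 0) : ↥(⋀[ℝ]^k M)) : ExteriorAlgebra ℝ M) = lw l := by
  subst hl
  simp only [wedgeIn, ExteriorAlgebra.ιMulti_apply, lw]
  congr 1
  apply List.ext_getElem
  · simp
  · intro i h1 h2
    simp at h1 h2
    simp

lemma mem_erase2 (l : List M) (i p q : ℕ) (hi : i < l.length) (hpq : p < q) (h1 : i ≠ p) (h2 : i ≠ q) :
    l[i] ∈ (l.eraseIdx q).eraseIdx p := by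
  by_cases h : i < q
  · by_cases h' : i < p
    · rw [List.mem_iff_getElem]
      refine ⟨i, ?_, ?_⟩
      · grind
      · grind
    · rw [List.mem_iff_getElem]
      refine ⟨i-1, ?_, ?_⟩
      · grind
      · grind
  · rw [List.mem_iff_getElem]
    refine ⟨i-2, ?_, ?_⟩
    · grind
    · grind

lemma erase2_perm (l : List M) (p q : ℕ) (hpq : p < q) (hq : q < l.length) :
    (l[p] :: l[q] :: (l.eraseIdx q).eraseIdx p).Perm l := by
  have h1 : (l[q] :: l.eraseIdx q).Perm l := List.getElem_cons_eraseIdx_perm hq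
  have hp : p < (l.eraseIdx q).length := by grind
  have h2 := List.getElem_cons_eraseIdx_perm hp
  have h3 : (l.eraseIdx q)[p] = l[p] := by grind
  rw [h3] at h2
  exact (List.Perm.swap _ _ _).trans ((List.Perm.cons _ h2).trans h1)

/-- If the convolution of a nonzero decomposable vector vanishes, its span is isotropic. -/
lemma isotropic (m : ℕ) (ω : M →ₗ[ℝ] M →ₗ[ℝ] ℝ) (hskew : ∀ x y, ω x y = - ω y x)
    (l : List M) (hl : l.length = m + 2) (h0 : lw l ≠ 0)
    (hs : (∑ p : Fin (m+2), ∑ q : Fin (m+2),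
          if p < q then
            ((-1 : ℝ) ^ (p.val + q.val + 1) * ω (l.getD p 0) (l.getD q 0)) •
              lw ((l.eraseIdx q.val).eraseIdx p.val)
          else 0) = 0) : ∀ a ∈ l, ∀ b ∈ l, ω a b = 0 := by
  have key : ∀ p q : ℕ, (_hpq : p < q) → (hq : q < m + 2) → ω (l[p]) (l[q]) = 0 := by
    intro p q hpq hq
    have hs' := congrArg (fun z => ExteriorAlgebra.ι ℝ (l[p]) * (ExteriorAlgebra.ι ℝ (l[q]) * z)) hs
    simp only [Finset.mul_sum, mul_zero] at hs'
    rw [Finset.sum_eq_single (⟨p, by omega⟩ : Fin (m+2)),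
      Finset.sum_eq_single (⟨q, by omega⟩ : Fin (m+2))] at hs'
    · rw [if_pos (by simpa using hpq)] at hs'
      simp only [mul_smul_comm, ← lw_cons] at hs'
      rw [smul_eq_zero] at hs'
      rcases hs' with h | h
      · rw [List.getD_eq_getElem _ _ (by omega), List.getD_eq_getElem _ _ (by omega)] at h
        simpa using h
      · exfalso
        have := lw_perm (erase2_perm l p q hpq (by omega))
        rw [h] at this
        apply h0
        rcases this with h | h
        · exact h.symm
        · exact neg_eq_zero.mp h.symm
    · intro q' _ hq'
      split_ifs with h
      · simp only [mul_smul_comm, ← lw_cons]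
        rw [lw_dup', smul_zero]
        right
        apply mem_erase2 _ _ _ _ _ h
        · simp; omega
        · intro h'; apply hq'; ext; simp [h']
      · simp
    · simp
    · intro p' _ hp'
      apply Finset.sum_eq_zero
      intro q' _
      split_ifs with h
      · simp only [mul_smul_comm, ← lw_cons]
        rw [lw_dup', smul_zero]
        by_cases hpq' : p = q'
        · right
          apply mem_erase2 _ _ _ _ _ h
          · have : p'.val < q'.val := h
            omega
          · omega
        · left
          apply mem_erase2 _ _ _ _ _ h _ hpq'
          intro h'; apply hp'; ext; simp [h']
      · simp
    · simp
  intro a ha b hb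
  obtain ⟨i, hi, rfl⟩ := List.mem_iff_getElem.mp ha
  obtain ⟨j, hj, rfl⟩ := List.mem_iff_getElem.mp hb
  rcases lt_trichotomy i j with h | h | h
  · exact key i j h (by omega)
  · subst h
    have := hskew l[i] l[i]
    linarith
  · rw [hskew, key j i h (by omega), neg_zero]

end lw

section coords

/-- coordinate functional, 1-indexed -/
noncomputable def pr (n i : ℕ) : (Fin (2 * n) → ℝ) →ₗ[ℝ] ℝ :=
  if h : 1 ≤ i ∧ i ≤ 2 * n then LinearMap.proj (⟨i - 1, by omega⟩ : Fin (2 * n)) else 0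

lemma pr_stdE (n i j : ℕ) (h1 : 1 ≤ i) (h2 : i ≤ 2 * n) :
    pr n i (stdE n j) = if i = j then 1 else 0 := by
  rw [pr, dif_pos ⟨h1, h2⟩]
  simp only [LinearMap.proj_apply, stdE]
  congr 1
  simp; omega

/-- the coordinate functional of `e_I` -/
noncomputable def cf (n k : ℕ) (I : Finset ℕ) : ExteriorAlgebra ℝ (Fin (2 * n) → ℝ) →ₗ[ℝ] ℝ :=
  ExteriorAlgebra.liftAlternating (Pi.single k
    ((Matrix.detRowAlternating (n := Fin k) (R := ℝ)).compLinearMap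
      (LinearMap.pi fun q : Fin k => pr n ((I.sort (· ≤ ·)).getD q.val 0))))

lemma cf_apply (n k : ℕ) (I : Finset ℕ) (x : Fin k → (Fin (2 * n) → ℝ)) :
    cf n k I (ExteriorAlgebra.ιMulti ℝ k x) =
      Matrix.det (Matrix.of fun p q : Fin k => pr n ((I.sort (· ≤ ·)).getD q.val 0) (x p)) := by
  rw [cf, ExteriorAlgebra.liftAlternating_apply_ιMulti, Pi.single_eq_same]
  rfl

lemma sort_getD_mem (k : ℕ) (I : Finset ℕ) (hk : I.card = k) (q : Fin k) :
    (I.sort (· ≤ ·)).getD q.val 0 ∈ I := by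
  have hq : q.val < (I.sort (· ≤ ·)).length := by simp [hk]
  rw [List.getD_eq_getElem _ _ hq]
  exact (Finset.mem_sort _).mp (List.getElem_mem hq)

lemma cf_finsetWedge (n k : ℕ) (I I' : Finset ℕ) (hI : I ⊆ Finset.Icc 1 (2 * n))
    (hk : I.card = k) (hk' : I'.card = k) :
    cf n k I (finsetWedge n k I') = if I' = I then 1 else 0 := by
  rw [finsetWedge, cf_apply]
  have hb : ∀ q : Fin k, 1 ≤ (I.sort (· ≤ ·)).getD q.val 0 ∧ (I.sort (· ≤ ·)).getD q.val 0 ≤ 2 * n := by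
    intro q
    exact Finset.mem_Icc.mp (hI (sort_getD_mem k I hk q))
  split_ifs with h
  · subst h
    convert Matrix.det_one (n := Fin k) (R := ℝ)
    ext p q
    rw [Matrix.of_apply, pr_stdE _ _ _ (hb q).1 (hb q).2, Matrix.one_apply]
    have hq : q.val < (I'.sort (· ≤ ·)).length := by simp [hk]
    have hp : p.val < (I'.sort (· ≤ ·)).length := by simp [hk]
    have hinj := (Finset.sort_nodup I' (· ≤ ·)).getElem_inj_iff (hi := hq) (hj := hp)
    rw [List.getD_eq_getElem _ _ hq, List.getD_eq_getElem _ _ hp]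
    simp only [hinj, Fin.ext_iff, eq_comm]
  · have : ¬ I' ⊆ I := fun hs => h (Finset.eq_of_subset_of_card_le hs (by omega))
    obtain ⟨i, hi, hi'⟩ := Finset.not_subset.mp this
    have := (Finset.mem_sort (· ≤ ·)).mpr hi
    obtain ⟨p, hp, hpi⟩ := List.mem_iff_getElem.mp this
    have hpk : p < k := by simpa [hk'] using hp
    apply Matrix.det_eq_zero_of_row_eq_zero ⟨p, hpk⟩
    intro q
    rw [Matrix.of_apply, pr_stdE _ _ _ (hb q).1 (hb q).2, List.getD_eq_getElem _ _ hp, hpi, if_neg]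
    intro h'
    apply hi'
    rw [← h']
    exact sort_getD_mem k I hk q

lemma cf_concVec (n : ℕ) (σ σd : Finset (Finset ℕ)) (I : Finset ℕ)
    (hI : I ∈ (Finset.Icc 1 (2 * n)).powersetCard (n - 1)) :
    cf n (n - 1) I (concVec n σ σd) = if ConcordantWith σ σd I then 1 else 0 := by
  rw [concVec, map_sum]
  have h1 := Finset.mem_powersetCard.mp hI
  rw [Finset.sum_congr rfl (g := fun I' => if I' = I then 1 else 0)]
  · rw [Finset.sum_ite_eq']
    simp [hI]
  · intro I' hI'
    have h2 := Finset.mem_powersetCard.mp (Finset.mem_filter.mp hI').1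
    exact cf_finsetWedge n (n-1) I I' h1.1 h1.2 h2.2

end coords

section twoblock

/-- the partition with one distinguished block and singletons -/
noncomputable def oneBlock (G A : Finset ℕ) : Finset (Finset ℕ) :=
  insert A ((G \ A).image fun x => {x})

lemma mem_oneBlock (G A B : Finset ℕ) :
    B ∈ oneBlock G A ↔ B = A ∨ ∃ x, x ∈ G ∧ x ∉ A ∧ B = {x} := by
  simp only [oneBlock, Finset.mem_insert, Finset.mem_image, Finset.mem_sdiff]
  constructor
  · rintro (h | ⟨x, hx, rfl⟩)
    · exact Or.inl h
    · exact Or.inr ⟨x, hx.1, hx.2, rfl⟩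
  · rintro (h | ⟨x, h1, h2, rfl⟩)
    · exact Or.inl h
    · exact Or.inr ⟨x, ⟨h1, h2⟩, rfl⟩

lemma oneBlock_part (G A : Finset ℕ) (hA : A ⊆ G) (h0 : A.Nonempty) :
    IsPartitionOf G (oneBlock G A) := by
  refine ⟨?_, ?_, ?_⟩
  · intro B hB
    rcases (mem_oneBlock _ _ _).mp hB with rfl | ⟨x, _, _, rfl⟩
    · exact h0
    · simp
  · intro B hB
    rcases (mem_oneBlock _ _ _).mp hB with rfl | ⟨x, h, _, rfl⟩
    · exact hA
    · simpa using h
  · intro x hx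
    by_cases h : x ∈ A
    · refine ⟨A, ⟨(mem_oneBlock _ _ _).mpr (Or.inl rfl), h⟩, ?_⟩
      rintro B ⟨hB, hxB⟩
      rcases (mem_oneBlock _ _ _).mp hB with rfl | ⟨y, _, h', rfl⟩
      · rfl
      · simp at hxB; subst hxB; exact absurd h h'
    · refine ⟨{x}, ⟨(mem_oneBlock _ _ _).mpr (Or.inr ⟨x, hx, h, rfl⟩), by simp⟩, ?_⟩
      rintro B ⟨hB, hxB⟩
      rcases (mem_oneBlock _ _ _).mp hB with rfl | ⟨y, _, h', rfl⟩
      · exact absurd hxB h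
      · simp at hxB; subst hxB; rfl

lemma oneBlock_card (G A : Finset ℕ) (hA : A ⊆ G) (h0 : A.Nonempty) :
    (oneBlock G A).card + A.card = G.card + 1 := by
  rw [oneBlock, Finset.card_insert_of_notMem, Finset.card_image_of_injective,
    Finset.card_sdiff_of_subset hA]
  · have := Finset.card_le_card hA
    omega
  · exact Finset.singleton_injective
  · intro h
    simp only [Finset.mem_image, Finset.mem_sdiff] at h
    obtain ⟨x, ⟨_, hx⟩, h⟩ := h
    apply hx
    rw [← h]; simp

lemma oneBlocks_nc (G G' A B : Finset ℕ)
    (hAB : ∀ a b c d : ℕ, a < b → b < c → c < d → a ∈ A → c ∈ A → b ∈ B → d ∈ B → False)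
    (hBA : ∀ a b c d : ℕ, a < b → b < c → c < d → a ∈ B → c ∈ B → b ∈ A → d ∈ A → False) :
    NonCrossing (oneBlock G A ∪ oneBlock G' B) := by
  intro a b c d h1 h2 h3 B₁ hB₁ B₂ hB₂ ha hc hb hd
  have h : ∀ C ∈ oneBlock G A ∪ oneBlock G' B, ∀ x ∈ C, ∀ y ∈ C, x < y → C = A ∨ C = B := by
    intro C hC x hx y hy hxy
    rcases Finset.mem_union.mp hC with hC | hC <;>
    rcases (mem_oneBlock _ _ _).mp hC with rfl | ⟨z, _, _, rfl⟩
    · simp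
    · simp at hx hy; omega
    · simp
    · simp at hx hy; omega
  rcases h B₁ hB₁ a ha c hc (by omega) with rfl | rfl <;>
  rcases h B₂ hB₂ b hb d hd (by omega) with rfl | rfl
  · rfl
  · exact (hAB a b c d h1 h2 h3 ha hc hb hd).elim
  · exact (hBA a b c d h1 h2 h3 ha hc hb hd).elim
  · rfl

lemma mem_oddSet (n x : ℕ) : x ∈ oddSet n ↔ x % 2 = 1 ∧ x < 2 * n := by
  simp only [oddSet, Finset.mem_image, Finset.mem_range]
  constructor
  · rintro ⟨k, hk, rfl⟩; omega
  · intro h; exact ⟨x / 2, by omega, by omega⟩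

lemma mem_evenSet (n x : ℕ) : x ∈ evenSet n ↔ x % 2 = 0 ∧ 1 ≤ x ∧ x ≤ 2 * n := by
  simp only [evenSet, Finset.mem_image, Finset.mem_range]
  constructor
  · rintro ⟨k, hk, rfl⟩; omega
  · intro h; exact ⟨x / 2 - 1, by omega, by omega⟩

lemma card_oddSet (n : ℕ) : (oddSet n).card = n := by
  rw [oddSet, Finset.card_image_of_injective, Finset.card_range]
  intro a b h; simpa using h

lemma card_evenSet (n : ℕ) : (evenSet n).card = n := by
  rw [evenSet, Finset.card_image_of_injective, Finset.card_range]
  intro a b h; simpa using h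

lemma twoBlock_pair (n : ℕ) (A B : Finset ℕ) (hA : A ⊆ oddSet n) (hB : B ⊆ evenSet n)
    (hA0 : A.Nonempty) (hB0 : B.Nonempty) (hc : A.card + B.card = n + 1)
    (hAB : ∀ a b c d : ℕ, a < b → b < c → c < d → a ∈ A → c ∈ A → b ∈ B → d ∈ B → False)
    (hBA : ∀ a b c d : ℕ, a < b → b < c → c < d → a ∈ B → c ∈ B → b ∈ A → d ∈ A → False) :
    IsNCPair n (oneBlock (oddSet n) A) (oneBlock (evenSet n) B) := by
  have hn := oneBlocks_nc (oddSet n) (evenSet n) A B hAB hBA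
  refine ⟨oneBlock_part _ _ hA hA0, ?_, oneBlock_part _ _ hB hB0, ?_, hn, ?_⟩
  · intro a b c d h1 h2 h3 B₁ hB₁ B₂ hB₂
    exact hn a b c d h1 h2 h3 B₁ (Finset.mem_union_left _ hB₁) B₂ (Finset.mem_union_left _ hB₂)
  · intro a b c d h1 h2 h3 B₁ hB₁ B₂ hB₂
    exact hn a b c d h1 h2 h3 B₁ (Finset.mem_union_right _ hB₁) B₂ (Finset.mem_union_right _ hB₂)
  · have h1 := oneBlock_card _ _ hA hA0
    have h2 := oneBlock_card _ _ hB hB0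
    rw [card_oddSet] at h1
    rw [card_evenSet] at h2
    omega

lemma twoBlock_conc (n : ℕ) (A B : Finset ℕ) (hA : A ⊆ oddSet n) (hB : B ⊆ evenSet n)
    (hc : A.card + B.card = n + 1) :
    concVec n (oneBlock (oddSet n) A) (oneBlock (evenSet n) B) =
      ∑ a ∈ A, ∑ b ∈ B, finsetWedge n (n - 1) (A.erase a ∪ B.erase b) := by
  have hd : ∀ x ∈ A, x ∉ B := by
    intro x h1 h2
    have h1 := (mem_oddSet _ _).mp (hA h1)
    have h2 := (mem_evenSet _ _).mp (hB h2)
    omega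
  rw [← Finset.sum_product', concVec]
  symm
  apply Finset.sum_bij (fun p _ => A.erase p.1 ∪ B.erase p.2)
  · rintro ⟨a, b⟩ hab
    obtain ⟨ha, hb⟩ := Finset.mem_product.mp hab
    simp only at ha hb
    rw [Finset.mem_filter, Finset.mem_powersetCard]
    refine ⟨⟨?_, ?_⟩, ?_⟩
    · intro x hx
      rw [Finset.mem_Icc]
      rcases Finset.mem_union.mp hx with hx | hx
      · have := (mem_oddSet _ _).mp (hA (Finset.mem_of_mem_erase hx)); omega
      · have := (mem_evenSet _ _).mp (hB (Finset.mem_of_mem_erase hx)); omega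
    · rw [Finset.card_union_of_disjoint, Finset.card_erase_of_mem ha, Finset.card_erase_of_mem hb]
      · have := Finset.card_pos.mpr ⟨a, ha⟩
        have := Finset.card_pos.mpr ⟨b, hb⟩
        omega
      · rw [Finset.disjoint_left]
        intro x h1 h2
        exact hd x (Finset.mem_of_mem_erase h1) (Finset.mem_of_mem_erase h2)
    · intro C hC
      rw [Finset.card_eq_one]
      rcases Finset.mem_union.mp hC with hC | hC <;>
      rcases (mem_oneBlock _ _ _).mp hC with rfl | ⟨z, hz, hz', rfl⟩
      · refine ⟨a, ?_⟩
        ext x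
        simp only [Finset.mem_sdiff, Finset.mem_union, Finset.mem_erase, Finset.mem_singleton]
        constructor
        · rintro ⟨h1, h2⟩; by_contra h3; exact h2 (Or.inl ⟨h3, h1⟩)
        · rintro rfl
          exact ⟨ha, by simp [hd x ha]⟩
      · refine ⟨z, ?_⟩
        ext x
        simp only [Finset.mem_sdiff, Finset.mem_union, Finset.mem_erase, Finset.mem_singleton]
        constructor
        · exact fun h => h.1
        · rintro rfl
          refine ⟨rfl, ?_⟩
          rintro (h | h)
          · exact hz' h.2
          · have h1 := (mem_oddSet _ _).mp hz
            have h2 := (mem_evenSet _ _).mp (hB h.2)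
            omega
      · refine ⟨b, ?_⟩
        ext x
        simp only [Finset.mem_sdiff, Finset.mem_union, Finset.mem_erase, Finset.mem_singleton]
        constructor
        · rintro ⟨h1, h2⟩; by_contra h3; exact h2 (Or.inr ⟨h3, h1⟩)
        · rintro rfl
          refine ⟨hb, ?_⟩
          rintro (h | h)
          · exact hd _ h.2 hb
          · exact h.1 rfl
      · refine ⟨z, ?_⟩
        ext x
        simp only [Finset.mem_sdiff, Finset.mem_union, Finset.mem_erase, Finset.mem_singleton]
        constructor
        · exact fun h => h.1
        · rintro rfl
          refine ⟨rfl, ?_⟩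
          rintro (h | h)
          · have h1 := (mem_evenSet _ _).mp hz
            have h2 := (mem_oddSet _ _).mp (hA h.2)
            omega
          · exact hz' h.2
  · rintro ⟨a, b⟩ hab ⟨a', b'⟩ hab' h
    obtain ⟨ha, hb⟩ := Finset.mem_product.mp hab
    obtain ⟨ha', hb'⟩ := Finset.mem_product.mp hab'
    simp only at ha hb ha' hb' h
    have e1 : a = a' := by
      by_contra hne
      have : a ∈ A.erase a' ∪ B.erase b' := Finset.mem_union_left _ (Finset.mem_erase.mpr ⟨hne, ha⟩)
      rw [← h] at this
      simp [hd a ha] at this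
    have e2 : b = b' := by
      by_contra hne
      have : b ∈ A.erase a' ∪ B.erase b' := Finset.mem_union_right _ (Finset.mem_erase.mpr ⟨hne, hb⟩)
      rw [← h] at this
      have h' : b ∉ A := fun h => hd b h hb
      simp [h'] at this
    rw [e1, e2]
  · intro I hI
    rw [Finset.mem_filter, Finset.mem_powersetCard] at hI
    obtain ⟨⟨hI1, hI2⟩, hI3⟩ := hI
    obtain ⟨a, ha⟩ := Finset.card_eq_one.mp
      (hI3 A (Finset.mem_union_left _ ((mem_oneBlock _ _ _).mpr (Or.inl rfl))))
    obtain ⟨b, hb⟩ := Finset.card_eq_one.mp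
      (hI3 B (Finset.mem_union_right _ ((mem_oneBlock _ _ _).mpr (Or.inl rfl))))
    have ha' : ∀ x, (x ∈ A ∧ x ∉ I) ↔ x = a := by
      intro x; rw [← Finset.mem_sdiff, ha, Finset.mem_singleton]
    have hb' : ∀ x, (x ∈ B ∧ x ∉ I) ↔ x = b := by
      intro x; rw [← Finset.mem_sdiff, hb, Finset.mem_singleton]
    refine ⟨(a, b), ?_, ?_⟩
    · rw [Finset.mem_product]
      exact ⟨((ha' a).mpr rfl).1, ((hb' b).mpr rfl).1⟩
    · ext x
      simp only [Finset.mem_union, Finset.mem_erase]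
      constructor
      · rintro (⟨h1, h2⟩ | ⟨h1, h2⟩)
        · by_contra h3; exact h1 ((ha' x).mp ⟨h2, h3⟩)
        · by_contra h3; exact h1 ((hb' x).mp ⟨h2, h3⟩)
      · intro hx
        by_cases hxA : x ∈ A
        · left
          refine ⟨?_, hxA⟩
          rintro rfl
          exact ((ha' x).mpr rfl).2 hx
        by_cases hxB : x ∈ B
        · right
          refine ⟨?_, hxB⟩
          rintro rfl
          exact ((hb' x).mpr rfl).2 hx
        exfalso
        have hx' := Finset.mem_Icc.mp (hI1 hx)
        have hmem : {x} ∈ oneBlock (oddSet n) A ∪ oneBlock (evenSet n) B := by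
          rw [Finset.mem_union]
          rcases Nat.mod_two_eq_zero_or_one x with h | h
          · right
            exact (mem_oneBlock _ _ _).mpr (Or.inr ⟨x, (mem_evenSet _ _).mpr ⟨h, hx'⟩, hxB, rfl⟩)
          · left
            exact (mem_oneBlock _ _ _).mpr
              (Or.inr ⟨x, (mem_oddSet _ _).mpr ⟨h, by omega⟩, hxA, rfl⟩)
        have := hI3 _ hmem
        rw [Finset.sdiff_eq_empty_iff_subset.mpr (by simpa using hx)] at this
        simp at this
  · intro p hp
    rfl

lemma twoBlock (n : ℕ) (A B : Finset ℕ)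
    (hp : (A ⊆ oddSet n ∧ B ⊆ evenSet n) ∨ (A ⊆ evenSet n ∧ B ⊆ oddSet n))
    (hA0 : A.Nonempty) (hB0 : B.Nonempty) (hc : A.card + B.card = n + 1)
    (hAB : ∀ a b c d : ℕ, a < b → b < c → c < d → a ∈ A → c ∈ A → b ∈ B → d ∈ B → False)
    (hBA : ∀ a b c d : ℕ, a < b → b < c → c < d → a ∈ B → c ∈ B → b ∈ A → d ∈ A → False) :
    ∃ σ σd, IsNCPair n σ σd ∧ concVec n σ σd =
      ∑ a ∈ A, ∑ b ∈ B, finsetWedge n (n - 1) (A.erase a ∪ B.erase b) := by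
  rcases hp with ⟨hA, hB⟩ | ⟨hA, hB⟩
  · exact ⟨_, _, twoBlock_pair n A B hA hB hA0 hB0 hc hAB hBA, twoBlock_conc n A B hA hB hc⟩
  · refine ⟨_, _, twoBlock_pair n B A hB hA hB0 hA0 (by omega) hBA hAB, ?_⟩
    rw [twoBlock_conc n B A hB hA (by omega), Finset.sum_comm]
    simp only [Finset.union_comm]

/-- The two-block sum is nonzero. -/
lemma twoBlock_ne (n : ℕ) (A B : Finset ℕ) (hA : A ⊆ Finset.Icc 1 (2 * n))
    (hB : B ⊆ Finset.Icc 1 (2 * n)) (hd : Disjoint A B)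
    (hA0 : A.Nonempty) (hB0 : B.Nonempty) (hc : A.card + B.card = n + 1) :
    ∑ a ∈ A, ∑ b ∈ B, finsetWedge n (n - 1) (A.erase a ∪ B.erase b) ≠ 0 := by
  obtain ⟨a0, ha0⟩ := hA0
  obtain ⟨b0, hb0⟩ := hB0
  have hcard : ∀ a ∈ A, ∀ b ∈ B, (A.erase a ∪ B.erase b).card = n - 1 := by
    intro a ha b hb
    rw [Finset.card_union_of_disjoint, Finset.card_erase_of_mem ha, Finset.card_erase_of_mem hb]
    · have := Finset.card_pos.mpr ⟨a, ha⟩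
      have := Finset.card_pos.mpr ⟨b, hb⟩
      omega
    · exact hd.mono (Finset.erase_subset _ _) (Finset.erase_subset _ _)
  intro h
  have h' := congrArg (cf n (n - 1) (A.erase a0 ∪ B.erase b0)) h
  simp only [map_sum, map_zero] at h'
  have h1 : (0:ℝ) < ∑ a ∈ A, ∑ b ∈ B, cf n (n - 1) (A.erase a0 ∪ B.erase b0)
      (finsetWedge n (n - 1) (A.erase a ∪ B.erase b)) := by
    have hval : ∀ a ∈ A, ∀ b ∈ B, cf n (n - 1) (A.erase a0 ∪ B.erase b0)
      (finsetWedge n (n - 1) (A.erase a ∪ B.erase b)) =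
        if A.erase a ∪ B.erase b = A.erase a0 ∪ B.erase b0 then 1 else 0 := by
      intro a ha b hb
      apply cf_finsetWedge
      · exact Finset.union_subset ((Finset.erase_subset _ _).trans hA)
          ((Finset.erase_subset _ _).trans hB)
      · exact hcard _ ha0 _ hb0
      · exact hcard _ ha _ hb
    have hnn : ∀ a ∈ A, ∀ b ∈ B, 0 ≤ cf n (n - 1) (A.erase a0 ∪ B.erase b0)
      (finsetWedge n (n - 1) (A.erase a ∪ B.erase b)) := by
      intro a ha b hb
      rw [hval a ha b hb]
      split_ifs <;> norm_num
    apply Finset.sum_pos' (fun a ha => Finset.sum_nonneg (hnn a ha))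
    refine ⟨a0, ha0, Finset.sum_pos' (hnn a0 ha0) ⟨b0, hb0, ?_⟩⟩
    rw [hval a0 ha0 b0 hb0, if_pos rfl]
    norm_num
  linarith

end twoblock

section lists

open ExteriorAlgebra (ι)

/-- wedge of standard vectors over a list of indices -/
noncomputable def eW (n : ℕ) (l : List ℕ) : ExteriorAlgebra ℝ (Fin (2 * n) → ℝ) :=
  lw (l.map (stdE n))

/-- product of consecutive sums -/
noncomputable def PP (n : ℕ) : List ℕ → ExteriorAlgebra ℝ (Fin (2 * n) → ℝ)
  | [] => 0
  | [_] => 1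
  | a :: b :: l => ι ℝ (stdE n a + stdE n b) * PP n (b :: l)

lemma eW_nil (n : ℕ) : eW n [] = 1 := by simp [eW, lw_nil]
lemma eW_cons (n a : ℕ) (l : List ℕ) : eW n (a :: l) = ι ℝ (stdE n a) * eW n l := by
  simp [eW, lw_cons]
lemma eW_append (n : ℕ) (l l' : List ℕ) : eW n (l ++ l') = eW n l * eW n l' := by
  simp [eW, lw_append]

lemma finsetWedge_eq (n k : ℕ) (l : List ℕ) (hl : l.Pairwise (· < ·)) (hk : l.length = k)
    (S : Finset ℕ) (hS : S = l.toFinset) : finsetWedge n k S = eW n l := by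
  subst hS
  subst hk
  have h : l.toFinset.sort (· ≤ ·) = l := by
    have hnd : l.Nodup := hl.imp (fun h => ne_of_lt h)
    apply List.Perm.eq_of_pairwise (le := (· ≤ ·))
    · intro a b _ _ h1 h2; omega
    · exact Finset.pairwise_sort _ _
    · exact hl.imp (fun h => le_of_lt h)
    · apply (List.perm_ext_iff_of_nodup (Finset.sort_nodup _ _) hnd).mpr
      intro a; simp
  rw [finsetWedge, h, ExteriorAlgebra.ιMulti_apply, eW, lw]
  congr 1
  apply List.ext_getElem
  · simp
  · intro i h1 h2
    simp at h1 h2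
    simp

lemma eW_cons_PP (n a : ℕ) (l : List ℕ) : eW n (a :: l) = ι ℝ (stdE n a) * PP n (a :: l) := by
  induction l generalizing a with
  | nil => simp [eW_cons, eW_nil, PP]
  | cons b l ih =>
    rw [eW_cons, ih b, PP, map_add, add_mul, mul_add, ← mul_assoc (ι ℝ (stdE n a)) (ι ℝ (stdE n a)),
      ExteriorAlgebra.ι_sq_zero, zero_mul, zero_add]

lemma eW_dup (n a : ℕ) (l : List ℕ) : ι ℝ (stdE n a) * eW n (a :: l) = 0 := by
  rw [eW_cons, ← mul_assoc, ExteriorAlgebra.ι_sq_zero, zero_mul]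

lemma eW_snoc_PP (n x : ℕ) (l : List ℕ) :
    eW n (l ++ [x]) = PP n (l ++ [x]) * ι ℝ (stdE n x) := by
  induction l with
  | nil => simp [eW_cons, eW_nil, PP]
  | cons a l ih =>
    cases l with
    | nil =>
      simp only [List.nil_append, List.cons_append, PP, eW_cons, eW_nil, mul_one, map_add, add_mul,
        ExteriorAlgebra.ι_sq_zero, add_zero]
    | cons b l =>
      simp only [List.cons_append, PP] at ih ⊢
      rw [eW_cons, mul_assoc, ← ih, map_add, add_mul, eW_dup, add_zero]

lemma PP_eq (n : ℕ) (l : List ℕ) (hl : l.Nodup) :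
    ∑ a ∈ l.toFinset, eW n (l.erase a) = PP n l := by
  induction l with
  | nil => simp [PP]
  | cons a l ih =>
    have hal : a ∉ l := (List.nodup_cons.mp hl).1
    rw [List.toFinset_cons, Finset.sum_insert (by simpa using hal), List.erase_cons_head]
    have h : ∑ x ∈ l.toFinset, eW n ((a :: l).erase x) = ι ℝ (stdE n a) * PP n l := by
      rw [← ih (List.nodup_cons.mp hl).2, Finset.mul_sum]
      apply Finset.sum_congr rfl
      intro x hx
      have hxa : a ≠ x := by rintro rfl; exact hal (by simpa using hx)
      rw [List.erase_cons_tail (by simpa using hxa), eW_cons]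
    rw [h]
    cases l with
    | nil => simp [PP, eW_nil]
    | cons b l => rw [PP, eW_cons_PP, map_add, add_mul, add_comm]

lemma taut1 {xa xX xZ xb xY : Prop} (h : xZ → ¬ xa) :
    (¬ xa ∧ (xX ∨ xZ) ∨ ¬ xb ∧ xY) ↔ ((¬ xa ∧ xX ∨ ¬ xb ∧ xY) ∨ xZ) := by tauto

lemma taut2 {xa xX xZ xb xY : Prop} (h : xX → ¬ xa) :
    (¬ xa ∧ (xX ∨ xZ) ∨ ¬ xb ∧ xY) ↔ ((xX ∨ ¬ xb ∧ xY) ∨ ¬ xa ∧ xZ) := by tauto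

lemma threeLists (n : ℕ) (X Y Z : List ℕ) (hs : (X ++ Y ++ Z).Pairwise (· < ·))
    (hX : X ≠ []) (hY : Y ≠ []) (hlen : X.length + Y.length + Z.length = n + 1)
    (hp : ((∀ x ∈ X ++ Z, x ∈ oddSet n) ∧ (∀ x ∈ Y, x ∈ evenSet n)) ∨
      ((∀ x ∈ X ++ Z, x ∈ evenSet n) ∧ (∀ x ∈ Y, x ∈ oddSet n))) :
    ∃ σ σd, IsNCPair n σ σd ∧ concVec n σ σd =
      PP n X * PP n Y * eW n Z + eW n X * PP n Y * PP n Z ∧ concVec n σ σd ≠ 0 := by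
  have hnd : (X ++ Y ++ Z).Nodup := hs.imp (fun h => ne_of_lt h)
  obtain ⟨hXY, hZs, hXYZ⟩ := List.pairwise_append.mp hs
  obtain ⟨hXs, hYs, hXYl⟩ := List.pairwise_append.mp hXY
  have hXn : X.Nodup := hXs.imp (fun h => ne_of_lt h)
  have hYn : Y.Nodup := hYs.imp (fun h => ne_of_lt h)
  have hZn : Z.Nodup := hZs.imp (fun h => ne_of_lt h)
  have l1 : ∀ x ∈ X, ∀ y ∈ Y, x < y := hXYl
  have l2 : ∀ x ∈ X, ∀ z ∈ Z, x < z := fun x hx z hz => hXYZ x (by simp [hx]) z hz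
  have l3 : ∀ y ∈ Y, ∀ z ∈ Z, y < z := fun x hx z hz => hXYZ x (by simp [hx]) z hz
  have hAc : (X ++ Z).toFinset.card = X.length + Z.length := by
    rw [List.toFinset_card_of_nodup, List.length_append]
    apply List.nodup_append'.mpr ⟨hXn, hZn, _⟩
    intro x h1 h2
    exact lt_irrefl _ (l2 x h1 x h2)
  have hBc : Y.toFinset.card = Y.length := List.toFinset_card_of_nodup hYn
  have hc : (X ++ Z).toFinset.card + Y.toFinset.card = n + 1 := by omega
  have hA0 : (X ++ Z).toFinset.Nonempty := by
    obtain ⟨x, hx⟩ := List.exists_mem_of_ne_nil _ hX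
    exact ⟨x, by simp [hx]⟩
  have hB0 : Y.toFinset.Nonempty := by
    obtain ⟨x, hx⟩ := List.exists_mem_of_ne_nil _ hY
    exact ⟨x, by simp [hx]⟩
  have hIo : ∀ x ∈ oddSet n, x ∈ Finset.Icc 1 (2 * n) := by
    intro x hx; have := (mem_oddSet _ _).mp hx; rw [Finset.mem_Icc]; omega
  have hIe : ∀ x ∈ evenSet n, x ∈ Finset.Icc 1 (2 * n) := by
    intro x hx; have := (mem_evenSet _ _).mp hx; rw [Finset.mem_Icc]; omega
  obtain ⟨σ, σd, hnc, hcv⟩ := twoBlock n (X ++ Z).toFinset Y.toFinset (by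
      rcases hp with ⟨h1, h2⟩ | ⟨h1, h2⟩
      · left; exact ⟨fun x hx => h1 x (List.mem_toFinset.mp hx), fun x hx => h2 x (List.mem_toFinset.mp hx)⟩
      · right; exact ⟨fun x hx => h1 x (List.mem_toFinset.mp hx), fun x hx => h2 x (List.mem_toFinset.mp hx)⟩)
    hA0 hB0 hc
    (by
      intro a b c d h1 h2 h3 ha hc' hb hd
      simp only [List.mem_toFinset, List.mem_append] at ha hc' hb hd
      rcases hc' with h | h
      · have := l1 c h b hb; omega
      · have := l3 d hd c h; omega)
    (by
      intro a b c d h1 h2 h3 ha hc' hb hd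
      simp only [List.mem_toFinset, List.mem_append] at ha hc' hb hd
      rcases hb with h | h
      · have := l1 b h a ha; omega
      · have := l3 c hc' b h; omega)
  refine ⟨σ, σd, hnc, ?_, ?_⟩
  · rw [hcv, List.toFinset_append, Finset.sum_union]
    · congr 1
      · rw [← PP_eq n X hXn, ← PP_eq n Y hYn, Finset.sum_mul_sum, Finset.sum_mul]
        apply Finset.sum_congr rfl
        intro a ha
        rw [Finset.sum_mul]
        apply Finset.sum_congr rfl
        intro b hb
        have ha' := List.mem_toFinset.mp ha
        have hb' := List.mem_toFinset.mp hb
        rw [← eW_append, ← eW_append]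
        apply finsetWedge_eq
        · refine List.Pairwise.sublist ?_ hs
          exact ((List.erase_sublist).append (List.erase_sublist)).append (List.Sublist.refl _)
        · have := List.length_pos_of_mem ha'
          have := List.length_pos_of_mem hb'
          simp only [List.length_append, List.length_erase_of_mem ha', List.length_erase_of_mem hb']
          omega
        · ext x
          have : x ∈ Z → x ≠ a := by rintro h rfl; exact lt_irrefl _ (l2 x ha' x h)
          simp only [Finset.mem_union, Finset.mem_erase, List.mem_toFinset, List.mem_append,
            hXn.mem_erase_iff, hYn.mem_erase_iff]
          exact taut1 this
      · rw [← PP_eq n Z hZn, ← PP_eq n Y hYn, Finset.mul_sum]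
        apply Finset.sum_congr rfl
        intro a ha
        rw [Finset.mul_sum, Finset.sum_mul]
        apply Finset.sum_congr rfl
        intro b hb
        have ha' := List.mem_toFinset.mp ha
        have hb' := List.mem_toFinset.mp hb
        rw [← eW_append, ← eW_append]
        apply finsetWedge_eq
        · refine List.Pairwise.sublist ?_ hs
          exact ((List.Sublist.refl _).append (List.erase_sublist)).append (List.erase_sublist)
        · have := List.length_pos_of_mem ha'
          have := List.length_pos_of_mem hb'
          simp only [List.length_append, List.length_erase_of_mem ha', List.length_erase_of_mem hb']
          omega
        · ext x
          have : x ∈ X → x ≠ a := by rintro h rfl; exact lt_irrefl _ (l2 x h x ha')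
          simp only [Finset.mem_union, Finset.mem_erase, List.mem_toFinset, List.mem_append,
            hZn.mem_erase_iff, hYn.mem_erase_iff]
          exact taut2 this
    · rw [Finset.disjoint_left]
      intro x h1 h2
      exact lt_irrefl _ (l2 x (List.mem_toFinset.mp h1) x (List.mem_toFinset.mp h2))
  · rw [hcv]
    apply twoBlock_ne n _ _ _ _ _ hA0 hB0 hc
    · intro x hx
      have := List.mem_toFinset.mp hx
      rcases hp with ⟨h1, h2⟩ | ⟨h1, h2⟩
      · exact hIo x (h1 x this)
      · exact hIe x (h1 x this)
    · intro x hx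
      have := List.mem_toFinset.mp hx
      rcases hp with ⟨h1, h2⟩ | ⟨h1, h2⟩
      · exact hIe x (h2 x this)
      · exact hIo x (h2 x this)
    · rw [Finset.disjoint_left]
      intro x h1 h2
      simp only [List.mem_toFinset, List.mem_append] at h1 h2
      rcases h1 with h1 | h1
      · exact lt_irrefl _ (l1 x h1 x h2)
      · exact lt_irrefl _ (l3 x h2 x h1)

/-- arithmetic progression with step two -/
def seg (a : ℕ) : ℕ → List ℕ
  | 0 => []
  | k + 1 => a :: seg (a + 2) k

lemma mem_seg (a k x : ℕ) : x ∈ seg a k ↔ ∃ j, j < k ∧ x = a + 2 * j := by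
  induction k generalizing a with
  | zero => simp [seg]
  | succ k ih =>
    rw [seg, List.mem_cons, ih]
    constructor
    · rintro (rfl | ⟨j, hj, rfl⟩)
      · exact ⟨0, by omega, by omega⟩
      · exact ⟨j + 1, by omega, by omega⟩
    · rintro ⟨j, hj, rfl⟩
      rcases j with _ | j
      · left; omega
      · right; exact ⟨j, by omega, by omega⟩

lemma seg_length (a k : ℕ) : (seg a k).length = k := by
  induction k generalizing a with
  | zero => simp [seg]
  | succ k ih => simp [seg, ih]

lemma seg_pairwise (a k : ℕ) : (seg a k).Pairwise (· < ·) := by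
  induction k generalizing a with
  | zero => simp [seg]
  | succ k ih =>
    rw [seg, List.pairwise_cons]
    refine ⟨?_, ih _⟩
    intro x hx
    obtain ⟨j, _, rfl⟩ := (mem_seg _ _ _).mp hx
    omega

lemma seg_snoc (a k : ℕ) : seg a (k + 1) = seg a k ++ [a + 2 * k] := by
  induction k generalizing a with
  | zero => simp [seg]
  | succ k ih =>
    rw [seg, ih (a + 2), seg, List.cons_append]
    congr 3
    omega

/-- `v_k` as an element of `V` -/
noncomputable def vE (n k : ℕ) : ↥(Vsub n) :=
  if h : vVec n k ∈ Vsub n then ⟨vVec n k, h⟩ else 0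

lemma sum_std (n k c : ℕ) (hc : c = 1 ∨ c = 2) (h1 : 1 ≤ k) (h2 : k ≤ 2 * n) :
    (∑ j : Fin n, (-1 : ℝ) ^ (j.val + 1) * (if 2 * j.val + c = k then 1 else 0)) =
      if k % 2 = c % 2 then (-1 : ℝ) ^ ((k - c) / 2 + 1) else 0 := by
  split_ifs with h
  · rw [Finset.sum_eq_single (⟨(k - c) / 2, by omega⟩ : Fin n)]
    · rw [if_pos (by simp only; omega), mul_one]
    · intro b _ hb
      rw [if_neg, mul_zero]
      intro h'
      apply hb
      ext
      simp only
      omega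
    · simp
  · apply Finset.sum_eq_zero
    intro j _
    rw [if_neg (by omega), mul_zero]

lemma vVec_mem (n k : ℕ) (h1 : 1 ≤ k) (h2 : k + 2 ≤ 2 * n) : vVec n k ∈ Vsub n := by
  have key : ∀ c, (c = 1 ∨ c = 2) →
      (∑ j : Fin n, (-1 : ℝ) ^ (j.val + 1) * (if 2 * j.val + c = k then 1 else 0)) +
      (∑ j : Fin n, (-1 : ℝ) ^ (j.val + 1) * (if 2 * j.val + c = k + 2 then 1 else 0)) = 0 := by
    intro c hc
    rw [sum_std n k c hc h1 (by omega), sum_std n (k + 2) c hc (by omega) h2]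
    by_cases h : k % 2 = c % 2
    · rw [if_pos h, if_pos (by omega), show (k + 2 - c) / 2 + 1 = ((k - c) / 2 + 1) + 1 by omega,
        pow_succ _ ((k - c) / 2 + 1)]
      ring
    · rw [if_neg h, if_neg (by omega), add_zero]
  rw [Vsub, Submodule.mem_inf, LinearMap.mem_ker, LinearMap.mem_ker]
  constructor
  · have := key 2 (Or.inr rfl)
    rw [← Finset.sum_add_distrib] at this
    simp only [LinearMap.sum_apply, LinearMap.smul_apply, LinearMap.proj_apply, vVec, stdE,
      Pi.add_apply, smul_eq_mul, mul_add]
    exact this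
  · have := key 1 (Or.inl rfl)
    rw [← Finset.sum_add_distrib] at this
    simp only [LinearMap.sum_apply, LinearMap.smul_apply, LinearMap.proj_apply, vVec, stdE,
      Pi.add_apply, smul_eq_mul, mul_add]
    exact this

lemma vE_coe (n k : ℕ) (h1 : 1 ≤ k) (h2 : k + 2 ≤ 2 * n) :
    (vE n k : Fin (2 * n) → ℝ) = vVec n k := by
  rw [vE, dif_pos (vVec_mem n k h1 h2)]

/-- list of `v`'s with step two -/
noncomputable def vl (n a : ℕ) : ℕ → List ↥(Vsub n)
  | 0 => []
  | k + 1 => vE n a :: vl n (a + 2) k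

lemma vl_length (n a k : ℕ) : (vl n a k).length = k := by
  induction k generalizing a with
  | zero => simp [vl]
  | succ k ih => simp [vl, ih]

lemma mem_vl (n a k x : ℕ) (h1 : a ≤ x) (h2 : x < a + 2 * k) (h3 : x % 2 = a % 2) :
    vE n x ∈ vl n a k := by
  induction k generalizing a with
  | zero => omega
  | succ k ih =>
    rw [vl, List.mem_cons]
    by_cases h : x = a
    · left; rw [h]
    · right; exact ih (a + 2) (by omega) (by omega) (by omega)

lemma map_lw (n : ℕ) (l : List ↥(Vsub n)) :
    ExteriorAlgebra.map ((Vsub n).subtype) (lw l) = lw (l.map (Vsub n).subtype) := by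
  induction l with
  | nil => simp [lw_nil]
  | cons a l ih =>
    rw [lw_cons, map_mul, ih, List.map_cons, lw_cons, ExteriorAlgebra.map_apply_ι]

lemma vl_PP (n a k : ℕ) (h1 : 1 ≤ a) (h2 : a + 2 * k ≤ 2 * n) :
    lw ((vl n a k).map (Vsub n).subtype) = PP n (seg a (k + 1)) := by
  induction k generalizing a with
  | zero => simp [vl, seg, lw_nil, PP]
  | succ k ih =>
    rw [vl, List.map_cons, lw_cons, ih (a + 2) (by omega) (by omega), Submodule.subtype_apply, vE_coe n a h1 (by omega), vVec]
    simp only [seg, PP]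

end lists

section reflection

/-- basic facts about the merged partition -/
structure Merged (n : ℕ) (P : Finset (Finset ℕ)) : Prop where
  cover : ∀ x, 1 ≤ x → x ≤ 2 * n → ∃ B ∈ P, x ∈ B
  rng : ∀ B ∈ P, ∀ x ∈ B, 1 ≤ x ∧ x ≤ 2 * n
  par : ∀ B ∈ P, ∀ x ∈ B, ∀ y ∈ B, x % 2 = y % 2
  uniq : ∀ B ∈ P, ∀ C ∈ P, ∀ x, x ∈ B → x ∈ C → B = C
  nc : NonCrossing P

lemma merged_of_pair (n : ℕ) (σ σd : Finset (Finset ℕ)) (h : IsNCPair n σ σd) :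
    Merged n (σ ∪ σd) := by
  obtain ⟨⟨_, ho1, ho2⟩, _, ⟨_, he1, he2⟩, _, hnc, _⟩ := h
  have ho : ∀ B ∈ σ, ∀ x ∈ B, x % 2 = 1 ∧ x < 2 * n := fun B hB x hx => (mem_oddSet _ _).mp (ho1 B hB hx)
  have he : ∀ B ∈ σd, ∀ x ∈ B, x % 2 = 0 ∧ 1 ≤ x ∧ x ≤ 2 * n :=
    fun B hB x hx => (mem_evenSet _ _).mp (he1 B hB hx)
  refine ⟨?_, ?_, ?_, ?_, hnc⟩
  · intro x h1 h2
    rcases Nat.mod_two_eq_zero_or_one x with h | h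
    · obtain ⟨B, hB, _⟩ := he2 x ((mem_evenSet _ _).mpr ⟨h, h1, h2⟩)
      exact ⟨B, Finset.mem_union_right _ hB.1, hB.2⟩
    · obtain ⟨B, hB, _⟩ := ho2 x ((mem_oddSet _ _).mpr ⟨h, by omega⟩)
      exact ⟨B, Finset.mem_union_left _ hB.1, hB.2⟩
  · intro B hB x hx
    rcases Finset.mem_union.mp hB with hB | hB
    · have := ho B hB x hx; omega
    · have := he B hB x hx; omega
  · intro B hB x hx y hy
    rcases Finset.mem_union.mp hB with hB | hB
    · have := ho B hB x hx; have := ho B hB y hy; omega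
    · have := he B hB x hx; have := he B hB y hy; omega
  · intro B hB C hC x hxB hxC
    rcases Finset.mem_union.mp hB with hB | hB <;> rcases Finset.mem_union.mp hC with hC | hC
    · exact (ho2 x (ho1 B hB hxB)).unique ⟨hB, hxB⟩ ⟨hC, hxC⟩
    · have := ho B hB x hxB; have := he C hC x hxC; omega
    · have := he B hB x hxB; have := ho C hC x hxC; omega
    · exact (he2 x (he1 B hB hxB)).unique ⟨hB, hxB⟩ ⟨hC, hxC⟩

lemma pairs_left (n : ℕ) (P : Finset (Finset ℕ)) (hP : Merged n P)
    (hI : ∀ B ∈ P, (B \ Finset.Icc 1 (n - 1)).card = 1) :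
    ∀ i, 1 ≤ i → i + 1 ≤ n → ∃ B ∈ P, i ∈ B ∧ 2 * n - i ∈ B := by
  have hex : ∀ i, ∃ j, 1 ≤ i → i + 1 ≤ n → ∃ B ∈ P, i ∈ B ∧ j ∈ B ∧ n ≤ j ∧ j ≤ 2 * n := by
    intro i
    by_cases h : 1 ≤ i ∧ i + 1 ≤ n
    · obtain ⟨B, hB, hi⟩ := hP.cover i h.1 (by omega)
      obtain ⟨j, hj⟩ := Finset.card_eq_one.mp (hI B hB)
      have hj' : j ∈ B \ Finset.Icc 1 (n - 1) := by rw [hj]; simp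
      rw [Finset.mem_sdiff, Finset.mem_Icc] at hj'
      have := hP.rng B hB j hj'.1
      exact ⟨j, fun _ _ => ⟨B, hB, hi, hj'.1, by omega, by omega⟩⟩
    · exact ⟨0, fun h1 h2 => absurd ⟨h1, h2⟩ h⟩
  choose f hf using hex
  have hpar : ∀ i, 1 ≤ i → i + 1 ≤ n → i % 2 = f i % 2 ∧ n ≤ f i ∧ f i ≤ 2 * n := by
    intro i h1 h2
    obtain ⟨B, hB, a, b, c, d⟩ := hf i h1 h2
    exact ⟨hP.par B hB _ a _ b, c, d⟩
  have hdec : ∀ i, 1 ≤ i → i + 2 ≤ n → f (i + 1) + 1 ≤ f i := by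
    intro i h1 h2
    by_contra hcon
    obtain ⟨B, hB, a, b, c, d⟩ := hf i h1 (by omega)
    obtain ⟨B', hB', a', b', c', d'⟩ := hf (i + 1) (by omega) (by omega)
    have p1 := hpar i h1 (by omega)
    have p2 := hpar (i + 1) (by omega) (by omega)
    have := hP.nc i (i + 1) (f i) (f (i + 1)) (by omega) (by omega) (by omega) B hB B' hB' a b a' b'
    subst this
    have := hP.par B hB i a (i + 1) a'
    omega
  have hup : ∀ i, 1 ≤ i → i + 1 ≤ n → f i + i ≤ 2 * n := by
    intro i h1
    induction i, h1 using Nat.le_induction with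
    | base => intro h2; have := hpar 1 (by omega) h2; omega
    | succ i h1 ih => intro h2; have := hdec i h1 (by omega); have := ih (by omega); omega
  have hlo : ∀ t i, 1 ≤ i → i + 1 + t = n → 2 * n ≤ f i + i := by
    intro t
    induction t with
    | zero => intro i h1 h2; have := hpar i h1 (by omega); omega
    | succ t ih =>
      intro i h1 h2
      have := ih (i + 1) (by omega) (by omega)
      have := hdec i h1 (by omega)
      omega
  intro i h1 h2
  obtain ⟨B, hB, a, b, c, d⟩ := hf i h1 h2
  have e1 := hup i h1 h2
  have e2 := hlo (n - (i + 1)) i h1 (by omega)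
  refine ⟨B, hB, a, ?_⟩
  rwa [show 2 * n - i = f i by omega]

lemma pairs_right (n : ℕ) (P : Finset (Finset ℕ)) (hP : Merged n P)
    (hI : ∀ B ∈ P, (B \ Finset.Icc (n + 1) (2 * n - 1)).card = 1) :
    ∀ i, 1 ≤ i → i + 1 ≤ n → ∃ B ∈ P, i ∈ B ∧ 2 * n - i ∈ B := by
  have hex : ∀ i, ∃ j, n + 1 ≤ i → i + 1 ≤ 2 * n → ∃ B ∈ P, i ∈ B ∧ j ∈ B ∧ 1 ≤ j ∧ (j ≤ n ∨ j = 2 * n) := by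
    intro i
    by_cases h : n + 1 ≤ i ∧ i + 1 ≤ 2 * n
    · obtain ⟨B, hB, hi⟩ := hP.cover i (by omega) (by omega)
      obtain ⟨j, hj⟩ := Finset.card_eq_one.mp (hI B hB)
      have hj' : j ∈ B \ Finset.Icc (n + 1) (2 * n - 1) := by rw [hj]; simp
      rw [Finset.mem_sdiff, Finset.mem_Icc] at hj'
      have := hP.rng B hB j hj'.1
      exact ⟨j, fun _ _ => ⟨B, hB, hi, hj'.1, by omega, by omega⟩⟩
    · exact ⟨0, fun h1 h2 => absurd ⟨h1, h2⟩ h⟩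
  choose f hf using hex
  have hpar0 : ∀ i, n + 1 ≤ i → i + 1 ≤ 2 * n → i % 2 = f i % 2 ∧ 1 ≤ f i ∧ (f i ≤ n ∨ f i = 2 * n) := by
    intro i h1 h2
    obtain ⟨B, hB, a, b, c, d⟩ := hf i h1 h2
    exact ⟨hP.par B hB _ a _ b, c, d⟩
  have hpar : ∀ i, n + 1 ≤ i → i + 1 ≤ 2 * n → i % 2 = f i % 2 ∧ 1 ≤ f i ∧ f i ≤ n := by
    intro i h1 h2
    have p1 := hpar0 i h1 h2
    refine ⟨p1.1, p1.2.1, ?_⟩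
    by_contra hcon
    have hfi : f i = 2 * n := by omega
    have p2 := hpar0 (i + 1) (by omega) (by omega)
    obtain ⟨B, hB, a, b, _⟩ := hf i h1 (by omega)
    obtain ⟨B', hB', a', b', _⟩ := hf (i + 1) (by omega) (by omega)
    have := hP.nc (f (i + 1)) i (i + 1) (f i) (by omega) (by omega) (by omega) B' hB' B hB b' a' a b
    subst this
    have := hP.par B' hB i a (i + 1) a'
    omega
  have hdec : ∀ i, n + 1 ≤ i → i + 2 ≤ 2 * n → f (i + 1) + 1 ≤ f i := by
    intro i h1 h2
    by_contra hcon
    obtain ⟨B, hB, a, b, _⟩ := hf i h1 (by omega)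
    obtain ⟨B', hB', a', b', _⟩ := hf (i + 1) (by omega) (by omega)
    have p1 := hpar i h1 (by omega)
    have p2 := hpar (i + 1) (by omega) (by omega)
    have := hP.nc (f i) (f (i + 1)) i (i + 1) (by omega) (by omega) (by omega) B hB B' hB' b a b' a'
    subst this
    have := hP.par B hB i a (i + 1) a'
    omega
  have hup : ∀ i, n + 1 ≤ i → i + 1 ≤ 2 * n → f i + i ≤ 2 * n := by
    intro i h1
    induction i, h1 using Nat.le_induction with
    | base => intro h2; have := hpar (n + 1) (by omega) h2; omega
    | succ i h1 ih => intro h2; have := hdec i h1 (by omega); have := ih (by omega); omega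
  have hlo : ∀ t i, n + 1 ≤ i → i + 1 + t = 2 * n → 2 * n ≤ f i + i := by
    intro t
    induction t with
    | zero => intro i h1 h2; have := hpar i h1 (by omega); omega
    | succ t ih =>
      intro i h1 h2
      have := ih (i + 1) (by omega) (by omega)
      have := hdec i h1 (by omega)
      omega
  intro i h1 h2
  obtain ⟨B, hB, a, b, _⟩ := hf (2 * n - i) (by omega) (by omega)
  have e1 := hup (2 * n - i) (by omega) (by omega)
  have e2 := hlo (i - 1) (2 * n - i) (by omega) (by omega)
  refine ⟨B, hB, ?_, a⟩
  rwa [show f (2 * n - i) = i by omega] at b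

lemma conc_iff (n : ℕ) (hn : 1 ≤ n) (σ σd : Finset (Finset ℕ)) (h : IsNCPair n σ σd) :
    ConcordantWith σ σd (Finset.Icc 1 (n - 1)) ↔
      ConcordantWith σ σd (Finset.Icc (n + 1) (2 * n - 1)) := by
  have hP := merged_of_pair n σ σd h
  have main : (∀ i, 1 ≤ i → i + 1 ≤ n → ∃ B ∈ σ ∪ σd, i ∈ B ∧ 2 * n - i ∈ B) →
      ∀ B ∈ σ ∪ σd, (B \ Finset.Icc 1 (n - 1)).card = (B \ Finset.Icc (n + 1) (2 * n - 1)).card := by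
    intro hp B hB
    have hcl : ∀ x ∈ B, x < 2 * n → 2 * n - x ∈ B := by
      intro x hx hx'
      have hr := hP.rng B hB x hx
      by_cases h1 : x + 1 ≤ n
      · obtain ⟨C, hC, a, b⟩ := hp x hr.1 h1
        rwa [hP.uniq B hB C hC x hx a]
      · by_cases h2 : x = n
        · subst h2; rwa [show 2 * x - x = x by omega]
        · obtain ⟨C, hC, a, b⟩ := hp (2 * n - x) (by omega) (by omega)
          rw [show 2 * n - (2 * n - x) = x by omega] at b
          rwa [hP.uniq B hB C hC x hx b]
    have hr := hP.rng B hB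
    have hcl' : ∀ x ∈ B, (if x = 2 * n then x else 2 * n - x) ∈ B := by
      intro x hx
      have := hr x hx
      split_ifs with h
      · exact hx
      · exact hcl x hx (by omega)
    apply Finset.card_bij' (fun x _ => if x = 2 * n then x else 2 * n - x)
      (fun x _ => if x = 2 * n then x else 2 * n - x)
    · intro x hx
      rw [Finset.mem_sdiff, Finset.mem_Icc] at hx ⊢
      refine ⟨hcl' x hx.1, ?_⟩
      have := hr x hx.1
      split_ifs <;> omega
    · intro x hx
      rw [Finset.mem_sdiff, Finset.mem_Icc] at hx ⊢
      refine ⟨hcl' x hx.1, ?_⟩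
      have := hr x hx.1
      split_ifs <;> omega
    · intro x hx
      have := hr x (Finset.mem_sdiff.mp hx).1
      split_ifs <;> omega
    · intro x hx
      have := hr x (Finset.mem_sdiff.mp hx).1
      split_ifs <;> omega
  constructor
  · intro hc B hB
    rw [← main (pairs_left n _ hP hc) B hB]
    exact hc B hB
  · intro hc B hB
    rw [main (pairs_right n _ hP hc) B hB]
    exact hc B hB

end reflection

section families

open ExteriorAlgebra (ι)

lemma famF (n k : ℕ) (h1 : 1 ≤ k) (h2 : k ≤ n) :
    ∃ σ σd, IsNCPair n σ σd ∧ concVec n σ σd ≠ 0 ∧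
      ExteriorAlgebra.map ((Vsub n).subtype) (lw (vl n 1 (k - 1) ++ vl n (2 * k) (n - k))) =
        concVec n σ σd := by
  obtain ⟨σ, σd, hp, hc, h0⟩ := threeLists n (seg 1 (k - 1 + 1)) (seg (2 * k) (n - k + 1)) []
    (by
      rw [List.append_nil, List.pairwise_append]
      refine ⟨seg_pairwise _ _, seg_pairwise _ _, ?_⟩
      intro a ha b hb
      obtain ⟨i, hi, rfl⟩ := (mem_seg _ _ _).mp ha
      obtain ⟨j, hj, rfl⟩ := (mem_seg _ _ _).mp hb
      omega)
    (by simp [seg]) (by simp [seg]) (by simp only [seg_length, List.length_nil]; omega)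
    (by
      left
      constructor
      · intro x hx
        rw [List.append_nil] at hx
        obtain ⟨i, hi, rfl⟩ := (mem_seg _ _ _).mp hx
        rw [mem_oddSet]; omega
      · intro x hx
        obtain ⟨i, hi, rfl⟩ := (mem_seg _ _ _).mp hx
        rw [mem_evenSet]; omega)
  refine ⟨σ, σd, hp, h0, ?_⟩
  rw [hc, map_lw, List.map_append, lw_append, vl_PP n 1 (k - 1) le_rfl (by omega),
    vl_PP n (2 * k) (n - k) (by omega) (by omega), eW_nil, PP, mul_one, mul_zero, add_zero]

lemma famG (n s j r p : ℕ) (hs : s = 1 ∨ s = 2) (hn : j + r + 3 = n) (hp : p = s + 2 * j + 1) :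
    ∃ σ σd, IsNCPair n σ σd ∧ concVec n σ σd ≠ 0 ∧
      ExteriorAlgebra.map ((Vsub n).subtype)
        (lw (vl n s j ++ vE n p :: (vE n (p + 1) - vE n (p - 1)) :: vl n (p + 3) r)) =
        concVec n σ σd := by
  obtain ⟨σ, σd, hpr, hc, h0⟩ := threeLists n (seg s (j + 1)) (seg p 2) (seg (p + 3) (r + 1))
    (by
      rw [List.pairwise_append, List.pairwise_append]
      refine ⟨⟨seg_pairwise _ _, seg_pairwise _ _, ?_⟩, seg_pairwise _ _, ?_⟩
      · intro a ha b hb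
        obtain ⟨i, hi, rfl⟩ := (mem_seg _ _ _).mp ha
        obtain ⟨i', hi', rfl⟩ := (mem_seg _ _ _).mp hb
        omega
      · intro a ha b hb
        obtain ⟨i', hi', rfl⟩ := (mem_seg _ _ _).mp hb
        rcases List.mem_append.mp ha with ha | ha <;>
        · obtain ⟨i, hi, rfl⟩ := (mem_seg _ _ _).mp ha
          omega)
    (by simp [seg]) (by simp [seg]) (by simp only [seg_length]; omega)
    (by
      rcases hs with rfl | rfl
      · left
        constructor
        · intro x hx
          rw [mem_oddSet]
          rcases List.mem_append.mp hx with hx | hx <;>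
          · obtain ⟨i, hi, rfl⟩ := (mem_seg _ _ _).mp hx
            omega
        · intro x hx
          obtain ⟨i, hi, rfl⟩ := (mem_seg _ _ _).mp hx
          rw [mem_evenSet]; omega
      · right
        constructor
        · intro x hx
          rw [mem_evenSet]
          rcases List.mem_append.mp hx with hx | hx <;>
          · obtain ⟨i, hi, rfl⟩ := (mem_seg _ _ _).mp hx
            omega
        · intro x hx
          obtain ⟨i, hi, rfl⟩ := (mem_seg _ _ _).mp hx
          rw [mem_oddSet]; omega)
  refine ⟨σ, σd, hpr, h0, ?_⟩
  have e1 : eW n (seg s (j + 1)) = PP n (seg s (j + 1)) * ι ℝ (stdE n (p - 1)) := by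
    rw [seg_snoc, eW_snoc_PP, show p - 1 = s + 2 * j by omega]
  have e2 : eW n (seg (p + 3) (r + 1)) = ι ℝ (stdE n (p + 3)) * PP n (seg (p + 3) (r + 1)) := by
    rw [seg, eW_cons_PP]
  have e3 : PP n (seg p 2) = ι ℝ (vVec n p) := by
    simp [seg, PP, vVec]
  have e4 : ((vE n (p + 1) - vE n (p - 1) : ↥(Vsub n)) : Fin (2 * n) → ℝ) =
      stdE n (p + 3) - stdE n (p - 1) := by
    rw [Submodule.coe_sub, vE_coe n (p + 1) (by omega) (by omega),
      vE_coe n (p - 1) (by omega) (by omega), vVec, vVec, show p - 1 + 2 = p + 1 by omega]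
    abel
  rw [hc, map_lw, List.map_append, lw_append, vl_PP n s j (by omega) (by omega), List.map_cons,
    List.map_cons, lw_cons, lw_cons, vl_PP n (p + 3) r (by omega) (by omega), Submodule.subtype_apply,
    Submodule.subtype_apply, e4, vE_coe n p (by omega) (by omega), e1, e2, e3, map_sub,
    mul_assoc (PP n (seg s (j + 1))) (ι ℝ (stdE n (p - 1))), ι_anti (stdE n (p - 1))]
  simp only [sub_eq_add_neg, add_mul, mul_add, mul_assoc, neg_mul, mul_neg]

end families

end Helpers


set_option maxHeartbeats 2000000

theorem uniqueness_of_symplectic_form (n : ℕ) (hn : 3 ≤ n)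
    (ω : ↥(Vsub n) →ₗ[ℝ] ↥(Vsub n) →ₗ[ℝ] ℝ)
    (hskew : ∀ x y, ω x y = - ω y x)
    (Q : ↥(⋀[ℝ]^(n - 1) ↥(Vsub n)) →ₗ[ℝ] ↥(⋀[ℝ]^(n - 3) ↥(Vsub n)))
    (hQ : ∀ x : Fin (n - 1) → ↥(Vsub n),
      Q (wedgeIn (n - 1) x) =
        ∑ p : Fin (n - 1), ∑ q : Fin (n - 1),
          if p < q then
            ((-1 : ℝ) ^ (p.val + q.val + 1) * ω (x p) (x q)) •
              wedgeIn (n - 3) (fun r : Fin (n - 3) =>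
                (((List.ofFn x).eraseIdx q.val).eraseIdx p.val).getD r.val 0)
          else 0)
    (hker : LinearMap.ker Q = HV n) :
    ∃ a : ℝ, a ≠ 0 ∧
      (∀ i : ℕ, 1 ≤ i → i ≤ 2 * n - 3 → ∀ x y : ↥(Vsub n),
        (x : Fin (2 * n) → ℝ) = vVec n i → (y : Fin (2 * n) → ℝ) = vVec n (i + 1) →
        ω x y = a * (-1 : ℝ) ^ (i + 1)) ∧
      (∀ i j : ℕ, 1 ≤ i → i ≤ 2 * n - 2 → 1 ≤ j → j ≤ 2 * n - 2 →
        ¬ (j = i + 1 ∨ i = j + 1) → ∀ x y : ↥(Vsub n),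
        (x : Fin (2 * n) → ℝ) = vVec n i → (y : Fin (2 * n) → ℝ) = vVec n j →
        ω x y = 0) := by
  -- isotropy of the lists coming from concordance vectors
  obtain ⟨m, rfl⟩ : ∃ m, n = m + 3 := ⟨n - 3, by omega⟩
  have hiso : ∀ L : List ↥(Vsub (m + 3)), L.length = m + 2 → ∀ σ σd, IsNCPair (m + 3) σ σd →
      concVec (m + 3) σ σd ≠ 0 →
      ExteriorAlgebra.map ((Vsub (m + 3)).subtype) (lw L) = concVec (m + 3) σ σd →
      ∀ a ∈ L, ∀ b ∈ L, ω a b = 0 := by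
    intro L hL σ σd hp h0 hmap
    have hlw : lw L ≠ 0 := by
      intro h
      apply h0
      rw [← hmap, h, map_zero]
    have hy := wedgeIn_coe (m + 2) L hL
    have hmem : wedgeIn (m + 2) (fun r : Fin (m + 2) => L.getD r.val 0) ∈ HV (m + 3) := by
      apply Submodule.subset_span
      refine ⟨σ, σd, hp, ?_⟩
      rw [← hmap, ← hy]
    rw [← hker, LinearMap.mem_ker] at hmem
    have hQ' := hQ (fun r : Fin (m + 2) => L.getD r.val 0)
    have hof : List.ofFn (fun r : Fin (m + 2) => L.getD r.val 0) = L := by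
      apply List.ext_getElem
      · simp [hL]
      · intro i h1 h2
        rw [List.getElem_ofFn]
        exact List.getD_eq_getElem _ _ h2
    rw [hof] at hQ'
    have hz := hQ'.symm.trans hmem
    apply isotropic m ω hskew L hL hlw
    have hz' := congrArg (fun z : ↥(⋀[ℝ]^m ↥(Vsub (m + 3))) =>
      (z : ExteriorAlgebra ℝ ↥(Vsub (m + 3)))) hz
    simp only [ZeroMemClass.coe_zero] at hz'
    refine Eq.trans ?_ hz'
    change _ = Submodule.subtype _ _
    rw [map_sum]
    apply Finset.sum_congr rfl
    intro p _
    rw [map_sum]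
    apply Finset.sum_congr rfl
    intro q _
    by_cases h : p < q
    · rw [if_pos h]
      refine Eq.trans ?_ (congrArg (Submodule.subtype _) (if_pos h)).symm
      rw [map_smul, Submodule.subtype_apply]
      congr 1
      have h' : p.val < q.val := h
      have hp' : p.val < m + 2 := p.isLt
      have hq' : q.val < m + 2 := q.isLt
      refine (wedgeIn_coe m ((L.eraseIdx q.val).eraseIdx p.val) ?_).symm
      rw [List.length_eraseIdx_of_lt, List.length_eraseIdx_of_lt] <;>
      (try rw [List.length_eraseIdx_of_lt]) <;> omega
    · rw [if_neg h]
      refine Eq.trans ?_ (congrArg (Submodule.subtype _) (if_neg h)).symm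
      first
        | rfl
        | (rw [map_zero]; rfl)
  set v := vE (m + 3) with hv
  have hF : ∀ k, 1 ≤ k → k ≤ m + 3 → ∀ i j,
      v i ∈ vl (m + 3) 1 (k - 1) ++ vl (m + 3) (2 * k) (m + 3 - k) →
      v j ∈ vl (m + 3) 1 (k - 1) ++ vl (m + 3) (2 * k) (m + 3 - k) → ω (v i) (v j) = 0 := by
    intro k h1 h2 i j hi hj
    obtain ⟨σ, σd, a, b, c⟩ := famF (m + 3) k h1 h2
    refine hiso _ ?_ σ σd a b c _ hi _ hj
    rw [List.length_append, vl_length, vl_length]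
    omega
  have hG : ∀ p, 2 ≤ p → p ≤ 2 * m + 3 → ω (v p) (v (p + 1) - v (p - 1)) = 0 ∧
      ∀ j, p + 3 ≤ j → j ≤ 2 * m + 4 → j % 2 ≠ p % 2 → ω (v p) (v j) = 0 := by
    intro p h1 h2
    obtain ⟨s, j, hs, hpj⟩ : ∃ s j, (s = 1 ∨ s = 2) ∧ p = s + 2 * j + 1 := by
      rcases Nat.mod_two_eq_zero_or_one p with h | h
      · exact ⟨1, p / 2 - 1, Or.inl rfl, by omega⟩
      · exact ⟨2, p / 2 - 1, Or.inr rfl, by omega⟩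
    obtain ⟨σ, σd, a, b, c⟩ := famG (m + 3) s j (m - j) p hs (by omega) hpj
    have hi := hiso _ (by
      simp only [List.length_append, List.length_cons, vl_length]
      omega) σ σd a b c
    constructor
    · apply hi <;> simp [hv]
    · intro j' h3 h4 h5
      apply hi
      · simp [hv]
      · have := mem_vl (m + 3) (p + 3) (m - j) j' h3 (by omega) (by omega)
        simp [hv, this]
  have hfar : ∀ i j, 1 ≤ i → i + 2 ≤ j → j ≤ 2 * m + 4 → ω (v i) (v j) = 0 := by
    intro i j h1 h2 h3
    by_cases hpar : i % 2 = j % 2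
    · rcases Nat.mod_two_eq_zero_or_one i with h | h
      · apply hF 1 (by omega) (by omega)
        · apply List.mem_append_right; apply mem_vl <;> omega
        · apply List.mem_append_right; apply mem_vl <;> omega
      · apply hF (m + 3) (by omega) (by omega)
        · apply List.mem_append_left; apply mem_vl <;> omega
        · apply List.mem_append_left; apply mem_vl <;> omega
    · by_cases hi1 : i = 1
      · apply hF 2 (by omega) (by omega)
        · apply List.mem_append_left; apply mem_vl <;> omega
        · apply List.mem_append_right; apply mem_vl <;> omega
      · exact (hG i (by omega) (by omega)).2 j (by omega) h3 (by omega)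
  have hfar' : ∀ i j, 1 ≤ i → i ≤ 2 * m + 4 → 1 ≤ j → j ≤ 2 * m + 4 →
      ¬ (j = i + 1 ∨ i = j + 1) → ω (v i) (v j) = 0 := by
    intro i j h1 h2 h3 h4 h5
    rcases lt_trichotomy i j with h | h | h
    · exact hfar i j h1 (by omega) h4
    · subst h
      have := hskew (v i) (v i)
      linarith
    · rw [hskew, hfar j i h3 (by omega) h2, neg_zero]
  have hstep : ∀ i, 1 ≤ i → i ≤ 2 * m + 3 → ω (v i) (v (i + 1)) = ω (v 1) (v 2) * (-1 : ℝ) ^ (i + 1) := by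
    intro i h1
    induction i, h1 using Nat.le_induction with
    | base => intro _; norm_num
    | succ i h1 ih =>
      intro h2
      have h3 := (hG (i + 1) (by omega) (by omega)).1
      rw [map_sub, Nat.add_sub_cancel, hskew (v (i + 1)) (v i), ih (by omega)] at h3
      rw [pow_succ]
      linarith
  have hcoe : ∀ i, 1 ≤ i → i ≤ 2 * m + 4 → ∀ x : ↥(Vsub (m + 3)),
      (x : Fin (2 * (m + 3)) → ℝ) = vVec (m + 3) i → x = v i := by
    intro i h1 h2 x hx
    apply Subtype.ext
    rw [hx, hv, vE_coe (m + 3) i h1 (by omega)]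
  refine ⟨ω (v 1) (v 2), ?_, ?_, ?_⟩
  · intro h0
    have hall : ∀ i j, 1 ≤ i → i ≤ 2 * m + 4 → 1 ≤ j → j ≤ 2 * m + 4 → ω (v i) (v j) = 0 := by
      intro i j h1 h2 h3 h4
      by_cases h5 : j = i + 1
      · rw [h5, hstep i h1 (by omega), h0, zero_mul]
      by_cases h6 : i = j + 1
      · rw [h6, hskew, hstep j h3 (by omega), h0, zero_mul, neg_zero]
      exact hfar' i j h1 h2 h3 h4 (by omega)
    have hmem : wedgeIn (m + 2) (fun r : Fin (m + 2) => v (r.val + 1)) ∈ HV (m + 3) := by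
      rw [← hker, LinearMap.mem_ker]
      refine (hQ _).trans ?_
      apply Finset.sum_eq_zero
      intro p _
      apply Finset.sum_eq_zero
      intro q _
      have hp' : p.val < m + 2 := p.isLt
      have hq' : q.val < m + 2 := q.isLt
      split_ifs
      · rw [hall _ _ (by omega) (by omega) (by omega) (by omega), mul_zero, zero_smul]
      · rfl
    set I0 := Finset.Icc 1 (m + 2) with hI0
    set I1 := Finset.Icc (m + 4) (2 * m + 5) with hI1
    let φ : ExteriorAlgebra ℝ (Fin (2 * (m + 3)) → ℝ) →ₗ[ℝ] ℝ :=
      cf (m + 3) (m + 2) I0 - cf (m + 3) (m + 2) I1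
    have hφ : ∀ y ∈ HV (m + 3), φ (ExteriorAlgebra.map ((Vsub (m + 3)).subtype)
        (y : ExteriorAlgebra ℝ ↥(Vsub (m + 3)))) = 0 := by
      intro y hy
      induction hy using Submodule.span_induction with
      | mem y hy =>
        obtain ⟨σ, σd, hp, hmap⟩ := hy
        rw [hmap]
        have c0 := cf_concVec (m + 3) σ σd I0 (by
          rw [Finset.mem_powersetCard]
          refine ⟨Finset.Icc_subset_Icc (by omega) (by omega), ?_⟩
          simp [hI0])
        have c1 := cf_concVec (m + 3) σ σd I1 (by
          rw [Finset.mem_powersetCard]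
          refine ⟨Finset.Icc_subset_Icc (by omega) (by omega), ?_⟩
          rw [hI1, Nat.card_Icc] <;> omega)
        have hiff := conc_iff (m + 3) (by omega) σ σd hp
        change ConcordantWith σ σd I0 ↔ ConcordantWith σ σd I1 at hiff
        change cf (m + 3) (m + 2) I0 _ - cf (m + 3) (m + 2) I1 _ = 0
        change cf (m + 3) (m + 2) I0 _ = _ at c0
        change cf (m + 3) (m + 2) I1 _ = _ at c1
        rw [c0, c1]
        by_cases hc : ConcordantWith σ σd I0
        · rw [if_pos hc, if_pos (hiff.mp hc), sub_self]
        · rw [if_neg hc, if_neg (fun h => hc (hiff.mpr h)), sub_self]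
      | zero => simp
      | add x y _ _ hx hy => rw [Submodule.coe_add, map_add, map_add, hx, hy, add_zero]
      | smul c x _ hx => rw [Submodule.coe_smul, map_smul, map_smul, hx, smul_zero]
    have hval := hφ _ hmem
    have hmapw : ExteriorAlgebra.map ((Vsub (m + 3)).subtype)
        ((wedgeIn (m + 2) (fun r : Fin (m + 2) => v (r.val + 1)) : ↥(⋀[ℝ]^(m + 2) ↥(Vsub (m + 3)))) :
          ExteriorAlgebra ℝ ↥(Vsub (m + 3))) =
        ExteriorAlgebra.ιMulti ℝ (m + 2) (fun r : Fin (m + 2) => vVec (m + 3) (r.val + 1)) := by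
      rw [wedgeIn, ExteriorAlgebra.map_apply_ιMulti]
      congr 1
      funext r
      have hr : r.val < m + 2 := r.isLt
      rw [Function.comp_apply, Submodule.subtype_apply, hv, vE_coe _ _ (by omega) (by omega)]
    have hval' : φ (ExteriorAlgebra.ιMulti ℝ (m + 2)
        (fun r : Fin (m + 2) => vVec (m + 3) (r.val + 1))) = 0 := by
      rw [← hmapw]; exact hval
    have hs0 : ∀ q : Fin (m + 2), (I0.sort (· ≤ ·)).getD q.val 0 = q.val + 1 := by
      intro q
      have : I0.sort (· ≤ ·) = List.range' 1 (m + 2) := by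
        apply List.Perm.eq_of_pairwise (le := (· ≤ ·))
        · intro a b _ _ h1 h2; omega
        · exact Finset.pairwise_sort _ _
        · exact (List.pairwise_lt_range' (s := 1) (n := m + 2)).imp (fun h => le_of_lt h)
        · apply (List.perm_ext_iff_of_nodup (Finset.sort_nodup _ _) List.nodup_range').mpr
          intro a
          rw [Finset.mem_sort, hI0, Finset.mem_Icc, List.mem_range'_1]
          omega
      rw [this, List.getD_eq_getElem _ _ (by simp), List.getElem_range']
      omega
    have c0 : cf (m + 3) (m + 2) I0 (ExteriorAlgebra.ιMulti ℝ (m + 2)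
        (fun r : Fin (m + 2) => vVec (m + 3) (r.val + 1))) = 1 := by
      rw [cf_apply, Matrix.det_of_upperTriangular]
      · apply Finset.prod_eq_one
        intro q _
        have hq : q.val < m + 2 := q.isLt
        rw [Matrix.of_apply, hs0, vVec, map_add, pr_stdE _ _ _ (by omega) (by omega),
          pr_stdE _ _ _ (by omega) (by omega), if_pos rfl, if_neg (by omega), add_zero]
      · intro p q hpq
        have hq : q.val < m + 2 := q.isLt
        have hpq' : q.val < p.val := hpq
        rw [Matrix.of_apply, hs0, vVec, map_add, pr_stdE _ _ _ (by omega) (by omega),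
          pr_stdE _ _ _ (by omega) (by omega), if_neg (by omega), if_neg (by omega), add_zero]
    have c1 : cf (m + 3) (m + 2) I1 (ExteriorAlgebra.ιMulti ℝ (m + 2)
        (fun r : Fin (m + 2) => vVec (m + 3) (r.val + 1))) = 0 := by
      rw [cf_apply]
      apply Matrix.det_eq_zero_of_row_eq_zero ⟨0, by omega⟩
      intro q
      have := Finset.mem_Icc.mp (sort_getD_mem (m + 2) I1 (by rw [hI1, Nat.card_Icc]; omega) q)
      rw [Matrix.of_apply, vVec, map_add, pr_stdE _ _ _ (by omega) (by omega),
          pr_stdE _ _ _ (by omega) (by omega), if_neg (by simp only; omega),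
          if_neg (by simp only; omega), add_zero]
    change cf (m + 3) (m + 2) I0 _ - cf (m + 3) (m + 2) I1 _ = 0 at hval'
    rw [c0, c1] at hval'
    norm_num at hval'
  · intro i h1 h2 x y hx hy
    rw [hcoe i h1 (by omega) x hx, hcoe (i + 1) (by omega) (by omega) y hy]
    exact hstep i h1 (by omega)
  · intro i j h1 h2 h3 h4 h5 x y hx hy
    rw [hcoe i h1 (by omega) x hx, hcoe j h3 (by omega) y hy]
    exact hfar' i j h1 (by omega) h3 (by omega) h5
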